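/- Let I_n be the Gaussian rule for weight w with nodes τ_1 < ... < τ_n and let A_{n+1} be the anti-Gaussian rule given by the eigendecomposition of the matrix J̃_{n+1} obtained from the Jacobi matrix J_n by appending the row/column (√(2β_n), α_n). Then A_{n+1} has positive weights and its n+1 real nodes τ̃_1 < ... < τ̃_{n+1} interlace the Gaussian nodes: τ̃_1 < τ_1 < τ̃_2 < ... < τ_n < τ̃_{n+1}. -/

import Mathlib

open Polynomial Matrix Finset

theorem det_tri {R : Type*} [CommRing R] (m : ℕ) (A : Matrix (Fin (m+2)) (Fin (m+2)) R)
    (h1 : ∀ j : Fin m, A (Fin.last _) j.castSucc.castSucc = 0)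
    (h2 : ∀ j : Fin m, A j.castSucc.castSucc (Fin.last _) = 0) :
    A.det = A (Fin.last _) (Fin.last _) * (A.submatrix Fin.castSucc Fin.castSucc).det
      - A (Fin.last _) (Fin.last m).castSucc * A (Fin.last m).castSucc (Fin.last _) *
        (A.submatrix (fun i : Fin m => i.castSucc.castSucc)
          (fun i : Fin m => i.castSucc.castSucc)).det := by
  have hs : ∀ j : Fin m, (Fin.last m).castSucc.succAbove j.castSucc = j.castSucc.castSucc := by
    intro j
    rw [Fin.succAbove_of_castSucc_lt]
    simp [Fin.lt_def]
  have hl : (Fin.last m).castSucc.succAbove (Fin.last m) = Fin.last (m+1) := by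
    rw [Fin.succAbove_of_le_castSucc]
    · simp
    · simp
  have hm : (A.submatrix Fin.castSucc (Fin.last m).castSucc.succAbove).det =
      A (Fin.last m).castSucc (Fin.last _) *
        (A.submatrix (fun i : Fin m => i.castSucc.castSucc)
          (fun i : Fin m => i.castSucc.castSucc)).det := by
    rw [Matrix.det_succ_column _ (Fin.last m), Fin.sum_univ_castSucc]
    rw [Finset.sum_eq_zero]
    · simp only [Matrix.submatrix_apply, hl, Fin.succAbove_last, Fin.val_last, ← two_mul, pow_mul,
        Matrix.submatrix_submatrix]
      simp only [neg_one_sq, one_pow, one_mul, zero_add]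
      congr 2
      ext i j
      simp [hs]
    · intro j _
      simp only [Matrix.submatrix_apply, hl, h2]
      simp
  rw [Matrix.det_succ_row _ (Fin.last _), Fin.sum_univ_castSucc, Fin.sum_univ_castSucc,
    Finset.sum_eq_zero]
  · simp only [Fin.succAbove_last, hm, Fin.val_last, Fin.val_castSucc]
    have e1 : (-1 : R) ^ (m + 1 + m) = -1 := by
      rw [show m + 1 + m = 2 * m + 1 by ring, pow_succ, pow_mul]; simp
    have e2 : (-1 : R) ^ (m + 1 + (m + 1)) = 1 := by
      rw [← two_mul, pow_mul]; simp
    rw [e1, e2]; ring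
  · intro j _
    simp [h1]

def tri (a c : ℕ → ℝ) (m : ℕ) : Matrix (Fin m) (Fin m) ℝ := fun i j =>
  if (i : ℕ) = (j : ℕ) then a i
  else if (i : ℕ) + 1 = (j : ℕ) then c j
  else if (j : ℕ) + 1 = (i : ℕ) then c i else 0

theorem tri_sub (a c : ℕ → ℝ) (m : ℕ) :
    (tri a c (m+1)).charmatrix.submatrix Fin.castSucc Fin.castSucc = (tri a c m).charmatrix := by
  ext1 i j
  simp [charmatrix_apply, tri, Matrix.diagonal_apply]

theorem tri_rec (a c : ℕ → ℝ) (m : ℕ) :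
    (tri a c (m+2)).charpoly = (X - C (a (m+1))) * (tri a c (m+1)).charpoly
      - C (c (m+1) ^ 2) * (tri a c m).charpoly := by
  unfold Matrix.charpoly
  rw [det_tri, tri_sub, ← tri_sub a c m, ← tri_sub a c (m+1), Matrix.submatrix_submatrix]
  · have e1 : (tri a c (m+2)).charmatrix (Fin.last _) (Fin.last _) = X - C (a (m+1)) := by
      simp [charmatrix_apply, tri]
    have e2 : (tri a c (m+2)).charmatrix (Fin.last _) (Fin.last m).castSucc = - C (c (m+1)) := by
      rw [charmatrix_apply_ne _ _ _ (by simp [Fin.ext_iff])]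
      simp [tri]
      omega
    have e3 : (tri a c (m+2)).charmatrix (Fin.last m).castSucc (Fin.last _) = - C (c (m+1)) := by
      rw [charmatrix_apply_ne _ _ _ (by simp [Fin.ext_iff])]
      simp [tri]
    rw [e1, e2, e3, C_pow, neg_mul_neg, sq]
    rfl
  · intro j
    have := j.2
    rw [charmatrix_apply_ne _ _ _ (by simp [Fin.ext_iff]; omega)]
    simp only [tri, Fin.val_last, Fin.val_castSucc]
    rw [if_neg (by omega), if_neg (by omega), if_neg (by omega)]; simp
  · intro j
    have := j.2
    rw [charmatrix_apply_ne _ _ _ (by simp [Fin.ext_iff]; omega)]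
    simp only [tri, Fin.val_last, Fin.val_castSucc]
    rw [if_neg (by omega), if_neg (by omega), if_neg (by omega)]; simp

theorem tri_vec (a c : ℕ → ℝ) (hc : ∀ k, 0 < c k) (m : ℕ) (v : Fin (m+1) → ℝ) (l : ℝ)
    (h : (tri a c (m+1)).mulVec v = l • v) (h0 : v 0 = 0) : v = 0 := by
  have key : ∀ k, ∀ hk : k < m + 1, v ⟨k, hk⟩ = 0 := by
    intro k
    induction k using Nat.strong_induction_on with
    | _ k ih =>
      intro hk
      rcases k with _ | k
      · exact h0
      · have := congrFun h ⟨k, by omega⟩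
        simp only [Pi.smul_apply, ih k (by omega) (by omega), smul_zero, Matrix.mulVec,
          dotProduct] at this
        rw [Finset.sum_eq_single ⟨k+1, hk⟩] at this
        · simp [tri] at this
          exact this.resolve_left (hc _).ne'
        · intro j _ hj
          rcases lt_or_ge (j : ℕ) (k+1) with h' | h'
          · rw [ih j h' j.2, mul_zero]
          · have : (j : ℕ) ≠ k + 1 := fun e => hj (Fin.ext e)
            simp only [tri]
            rw [if_neg (by omega), if_neg (by omega), if_neg (by omega), zero_mul]
        · simp
  ext ⟨k, hk⟩; exact key k hk

theorem sign_prod (N : ℕ) (i : ℕ) (hi : i ≤ N) (x : ℝ) (t : Fin N → ℝ)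
    (h1 : ∀ j : Fin N, (j : ℕ) < i → t j < x) (h2 : ∀ j : Fin N, i ≤ (j : ℕ) → x < t j) :
    0 < (-1) ^ (N + i) * (∏ j, (X - C (t j))).eval x := by
  rw [eval_prod]
  simp only [eval_sub, eval_X, eval_C]
  induction N with
  | zero => 
    obtain rfl : i = 0 := by omega
    simp
  | succ N ih =>
    rw [Fin.prod_univ_castSucc]
    rcases Nat.lt_or_ge N i with h | h
    · obtain rfl : i = N + 1 := by omega
      rw [← two_mul, pow_mul]
      simp only [neg_one_sq, one_pow, one_mul]
      refine mul_pos (Finset.prod_pos fun j _ => sub_pos.2 (h1 _ ?_)) (sub_pos.2 (h1 _ ?_))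
      · simp
      · simp
    · have := ih h (fun j => t j.castSucc) (fun j hj => h1 _ (by simpa)) (fun j hj => h2 _ (by simpa))
      have h3 := h2 (Fin.last N) (by simpa)
      have := mul_pos this (sub_pos.2 h3)
      refine this.trans_eq ?_
      ring

theorem ivt_root (Q : ℝ[X]) (k : ℕ) (x y : ℝ) (h : x < y) (hx : 0 < (-1) ^ (k+1) * Q.eval x)
    (hy : 0 < (-1) ^ k * Q.eval y) : ∃ z, x < z ∧ z < y ∧ Q.eval z = 0 := by
  have hc : ContinuousOn (fun z => (-1) ^ k * Q.eval z) (Set.Icc x y) := by fun_prop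
  have := intermediate_value_Ioo h.le hc
  have hz : (0:ℝ) ∈ Set.Ioo ((-1) ^ k * Q.eval x) ((-1) ^ k * Q.eval y) := by
    refine ⟨?_, hy⟩
    rw [pow_succ] at hx; linarith
  obtain ⟨z, hz, e⟩ := this hz
  refine ⟨z, hz.1, hz.2, ?_⟩
  simpa using e

theorem step (N : ℕ) (Q : ℝ[X]) (hQ : Q.Monic) (hd : Q.natDegree = N + 1) (t : Fin N → ℝ)
    (ht : StrictMono t) (hs : ∀ i : Fin _, 0 < (-1) ^ (N + (i : ℕ)) * Q.eval (t i)) :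
    ∃ r : Fin (N+1) → ℝ, StrictMono r ∧ Q = ∏ i, (X - C (r i)) ∧
      ∀ i : Fin N, r i.castSucc < t i ∧ t i < r i.succ := by
  have hpos : 0 < Q.degree := by
    rw [← natDegree_pos_iff_degree_pos]; omega
  have htop : Filter.Tendsto (fun x => Q.eval x) Filter.atTop Filter.atTop :=
    Q.tendsto_atTop_of_leadingCoeff_nonneg hpos (by simp [hQ.leadingCoeff])
  have hbot : Filter.Tendsto (fun x => (-1) ^ (N+1) * Q.eval (-x)) Filter.atTop Filter.atTop := by
    have := ((C ((-1) ^ (N+1)) * Q.comp (-X)) : ℝ[X]).tendsto_atTop_of_leadingCoeff_nonneg ?_ ?_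
    · simpa using this
    · rw [← natDegree_pos_iff_degree_pos, natDegree_C_mul (by simp), natDegree_comp]
      simp [hd]
    · rw [leadingCoeff_mul, leadingCoeff_comp (by simp)]
      simp [hQ.leadingCoeff, hd, ← mul_pow]
  obtain ⟨R, hR0, hR⟩ := ((htop.eventually_gt_atTop 0).and
    (Filter.eventually_all.2 fun i : Fin N => Filter.eventually_gt_atTop (t i))).exists
  obtain ⟨L, hL0, hLR, hL⟩ := ((hbot.eventually_gt_atTop 0).and
    ((Filter.eventually_gt_atTop (-R)).and
    (Filter.eventually_all.2 fun i : Fin N => Filter.eventually_gt_atTop (-(t i))))).exists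
  -- lower and upper end points
  let lo : Fin (N+1) → ℝ := Fin.cons (-L) t
  let hi : Fin (N+1) → ℝ := Fin.snoc t R
  have hlo : ∀ i : Fin (N+1), 0 < (-1) ^ (N + (i : ℕ) + 1) * Q.eval (lo i) := by
    intro i
    refine Fin.cases ?_ (fun j => ?_) i
    · simpa [lo] using hL0
    · have := hs j
      simp only [lo, Fin.cons_succ, Fin.val_succ]
      refine this.trans_eq ?_
      ring
  have hhi : ∀ i : Fin (N+1), 0 < (-1) ^ (N + (i : ℕ)) * Q.eval (hi i) := by
    intro i
    refine Fin.lastCases ?_ (fun j => ?_) i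
    · simp only [hi, Fin.snoc_last, Fin.val_last, ← two_mul, pow_mul]
      simpa using hR0
    · simpa [hi] using hs j
  have hlt : ∀ i, lo i < hi i := by
    intro i
    refine Fin.cases ?_ (fun j => ?_) i
    · refine Fin.lastCases (motive := fun k => lo 0 < hi k) ?_ (fun j => ?_) 0
      · simp only [lo, hi, Fin.cons_zero, Fin.snoc_last]; linarith
      · simp only [lo, hi, Fin.cons_zero, Fin.snoc_castSucc]; linarith [hL j]
    · refine (show ∀ k : Fin (N+1), j.castSucc < k → lo j.succ < hi k from ?_) _ 
        Fin.castSucc_lt_succ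
      intro k
      refine Fin.lastCases ?_ (fun l => ?_) k
      · intro _; simpa [lo, hi] using hR j
      · intro h; simpa [lo, hi] using ht (by simpa using h)
  choose r hr1 hr2 hr3 using fun i : Fin (N+1) => ivt_root Q (N + i) (lo i) (hi i) (hlt i) (hlo i) (hhi i)
  have hint : ∀ i : Fin N, r i.castSucc < t i ∧ t i < r i.succ := fun i =>
    ⟨by simpa [hi] using hr2 i.castSucc, by simpa [lo] using hr1 i.succ⟩
  have hmono : StrictMono r := Fin.strictMono_iff_lt_succ.2 fun i => (hint i).1.trans (hint i).2
  refine ⟨r, hmono, ?_, hint⟩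
  have hdvd : ∏ i, (X - C (r i)) ∣ Q := by
    apply Finset.prod_dvd_of_coprime
    · intro i _ j _ hij
      exact pairwise_coprime_X_sub_C hmono.injective hij
    · intro i _
      exact dvd_iff_isRoot.2 (hr3 i)
  refine (eq_of_monic_of_dvd_of_natDegree_le (monic_prod_of_monic _ _ fun i _ => monic_X_sub_C _)
    hQ hdvd ?_)
  rw [hd, natDegree_prod_of_monic _ _ fun i _ => monic_X_sub_C _]
  simp

theorem unique_roots (N : ℕ) (s t : Fin N → ℝ) (hs : StrictMono s) (ht : StrictMono t)
    (h : ∏ i, (X - C (s i)) = ∏ i, (X - C (t i))) : s = t := by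
  have hr : ∀ u : Fin N → ℝ, ∀ x, (∏ i, (X - C (u i))).eval x = 0 ↔ x ∈ Set.range u := by
    intro u x
    rw [eval_prod, Finset.prod_eq_zero_iff]
    simp [sub_eq_zero, eq_comm]
  apply (StrictMono.range_inj hs ht).1
  ext x
  rw [← hr, ← hr, h]

theorem tri_step (a c : ℕ → ℝ) (hc : ∀ k, 0 < c k) (m : ℕ) (t : Fin (m+1) → ℝ)
    (ht : StrictMono t) (hp : (tri a c (m+1)).charpoly = ∏ i, (X - C (t i)))
    (hs : ∀ i : Fin _, 0 < (-1) ^ (m + (i : ℕ)) * (tri a c m).charpoly.eval (t i)) :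
    ∃ r : Fin (m+2) → ℝ, StrictMono r ∧ (tri a c (m+2)).charpoly = ∏ i, (X - C (r i)) ∧
      ∀ i : Fin (m+1), r i.castSucc < t i ∧ t i < r i.succ := by
  refine step (m+1) _ (charpoly_monic _) (by simp [charpoly_natDegree_eq_dim]) t ht fun i => ?_
  have h0 : (tri a c (m+1)).charpoly.eval (t i) = 0 := by
    rw [hp, eval_prod]
    exact Finset.prod_eq_zero (Finset.mem_univ i) (by simp)
  rw [tri_rec]
  simp only [eval_sub, eval_mul, h0, eval_C]
  have := mul_pos (pow_pos (hc (m+1)) 2) (hs i)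
  refine this.trans_eq ?_
  ring

theorem tri_inv (a c : ℕ → ℝ) (hc : ∀ k, 0 < c k) (m : ℕ) :
    ∃ t : Fin (m+1) → ℝ, StrictMono t ∧ (tri a c (m+1)).charpoly = ∏ i, (X - C (t i)) ∧
    ∀ i : Fin (m+1), 0 < (-1) ^ (m + (i : ℕ)) * (tri a c m).charpoly.eval (t i) := by
  induction m with
  | zero =>
    refine ⟨fun _ => a 0, fun i j h => absurd h (by omega), ?_, ?_⟩
    · simp [Matrix.charpoly, charmatrix_apply, tri]
    · intro i
      simp [Matrix.charpoly]
  | succ m ih =>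
    obtain ⟨t, ht, hp, hs⟩ := ih
    obtain ⟨r, hr, hq, hi⟩ := tri_step a c hc m t ht hp hs
    refine ⟨r, hr, hq, fun i => ?_⟩
    rw [hp]
    refine sign_prod (m+1) i (by omega) _ t ?_ ?_
    · intro j hj
      refine (hi j).2.trans_le (hr.monotone ?_)
      rw [Fin.le_def]; simpa using hj
    · intro j hj
      refine (hr.monotone ?_).trans_lt (hi j).1
      rw [Fin.le_def]; simpa using hj

/-- The anti-Gaussian rule, obtained from the extended Jacobi matrix `J̃_{n+1}`
(with appended row/column `(√(2βₙ), αₙ)`), has `n+1` real nodes which strictly interlace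
the Gaussian nodes, and all its weights (`β₀` times the squared first components of
normalized eigenvectors of `J̃_{n+1}`) are positive. -/
theorem anti_gaussian_interlacing_and_positive_weights (n : ℕ) (hn : 1 ≤ n)
    (a : ℕ → ℝ) (b : ℕ → ℝ) (hb : ∀ k, 0 < b k)
    (b₀ : ℝ) (hb₀ : 0 < b₀)
    (Jn : Matrix (Fin n) (Fin n) ℝ)
    (hJn : ∀ i j : Fin n, Jn i j =
      if (i : ℕ) = (j : ℕ) then a i
      else if (i : ℕ) + 1 = (j : ℕ) then Real.sqrt (b ((i : ℕ) + 1))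
      else if (j : ℕ) + 1 = (i : ℕ) then Real.sqrt (b ((j : ℕ) + 1))
      else 0)
    (Jt : Matrix (Fin (n + 1)) (Fin (n + 1)) ℝ)
    (hJt : ∀ i j : Fin (n + 1), Jt i j =
      if (i : ℕ) = (j : ℕ) then a i
      else if (i : ℕ) + 1 = (j : ℕ) then
        (if (j : ℕ) = n then Real.sqrt (2 * b n) else Real.sqrt (b ((i : ℕ) + 1)))
      else if (j : ℕ) + 1 = (i : ℕ) then
        (if (i : ℕ) = n then Real.sqrt (2 * b n) else Real.sqrt (b ((j : ℕ) + 1)))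
      else 0)
    (τ : Fin n → ℝ) (hτ : StrictMono τ)
    (hchar : Jn.charpoly = ∏ i, (X - C (τ i))) :
    ∃ τt : Fin (n + 1) → ℝ, StrictMono τt ∧
      Jt.charpoly = ∏ i, (X - C (τt i)) ∧
      (∀ i : Fin n, τt i.castSucc < τ i ∧ τ i < τt i.succ) ∧
      (∀ i : Fin (n + 1), ∀ v : Fin (n + 1) → ℝ,
        (∑ j, v j ^ 2 = 1) → Jt.mulVec v = τt i • v → 0 < b₀ * v 0 ^ 2) := by
  let c : ℕ → ℝ := fun k => if k = n then Real.sqrt (2 * b n) else Real.sqrt (b k)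
  have hc : ∀ k, 0 < c k := by
    intro k
    have h1 := hb n
    have h2 := hb k
    simp only [c]
    split_ifs <;> positivity
  have e1 : Jn = tri a c n := by
    ext i j
    have hi := i.2
    have hj := j.2
    rw [hJn]
    simp only [tri, c]
    split_ifs with h1 h2 h3 h4 h5 h6 <;> first | rfl | omega | simp_all
  have e2 : Jt = tri a c (n+1) := by
    ext i j
    rw [hJt]
    simp only [tri, c]
    split_ifs with h1 h2 h3 h4 h5 h6 <;> first | rfl | omega | simp_all
  subst e1 e2
  obtain ⟨m, rfl⟩ : ∃ m, n = m + 1 := ⟨n - 1, by omega⟩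
  obtain ⟨t, ht, hp, hs⟩ := tri_inv a c hc m
  obtain rfl : t = τ := unique_roots _ _ _ ht hτ (hp.symm.trans hchar)
  obtain ⟨r, hr, hq, hi⟩ := tri_step a c hc m t ht hp hs
  refine ⟨r, hr, hq, hi, ?_⟩
  intro i v hv he
  have h0 : v 0 ≠ 0 := by
    intro h0
    have := tri_vec a c hc _ v _ he h0
    subst this
    simp at hv
  positivity
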